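/- Let α ∈ (0,1). For every x ≥ 0 the series Σ_{n=0}^∞ α^{2n} B_n(x) converges absolutely and equals x·H_α(x), where H_α(x) := ₂F₁(1+α, 1−α; 2; −x) is given by H_α(x) = (1/(Γ(1−α)Γ(1+α))) ∫₀¹ u^{−α}(1−u)^{α}(1+xu)^{−1−α} du. -/

import Mathlib

open MeasureTheory Real Set

/-- The hyperlogarithm `Hlog(x,[0,-1,…,0,-1])` with `n` alternating letter pairs `(0,-1)`,
defined recursively together with `Bfun`. -/
noncomputable def Afun : ℕ → ℝ → ℝ
  | 0 => fun _ => 1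
  | n+1 => fun x => ∫ t in (0:ℝ)..x, (∫ s in (0:ℝ)..t, Afun n s / (1 + s)) / t

/-- The hyperlogarithm `Hlog(x,[-1,0,-1,…,0,-1])`: the letter `-1` followed by `n`
alternating pairs `(0,-1)`. -/
noncomputable def Bfun (n : ℕ) (x : ℝ) : ℝ := ∫ t in (0:ℝ)..x, Afun n t / (1 + t)

/-- The Gauss hypergeometric function `₂F₁(1+α, 1-α; 2; -x)` via its Euler integral. -/
noncomputable def Hhyp (α x : ℝ) : ℝ :=
  (1 / (Real.Gamma (1 - α) * Real.Gamma (1 + α))) *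
    ∫ u in (0:ℝ)..1, u ^ (-α) * (1 - u) ^ α * (1 + x * u) ^ (-1 - α)

open Filter Topology

noncomputable def QQ (f : ℝ → ℝ) (x : ℝ) : ℝ := ∫ t in (0:ℝ)..x, f t / (1 + t)

noncomputable def TT (f : ℝ → ℝ) (x : ℝ) : ℝ := ∫ t in (0:ℝ)..x, QQ f t / t

lemma Afun_succ (n : ℕ) : Afun (n+1) = TT (Afun n) := by
  funext x; simp only [Afun, TT, QQ]

lemma Bfun_eq (n : ℕ) : Bfun n = QQ (Afun n) := rfl

lemma div_cont {f : ℝ → ℝ} (hf : ContinuousOn f (Ici 0)) :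
    ContinuousOn (fun t => f t / (1 + t)) (Ici 0) := by
  refine hf.div (by fun_prop) ?_
  intro t ht
  have : (0:ℝ) ≤ t := ht
  positivity

lemma ici_ii {g : ℝ → ℝ} (hg : ContinuousOn g (Ici 0)) {x : ℝ} (hx : 0 ≤ x) :
    IntervalIntegrable g volume 0 x := by
  apply ContinuousOn.intervalIntegrable
  rw [uIcc_of_le hx]
  exact hg.mono Icc_subset_Ici_self

lemma prim_cont {g : ℝ → ℝ} (hg : ∀ x, 0 ≤ x → IntervalIntegrable g volume 0 x) :
    ContinuousOn (fun x => ∫ t in (0:ℝ)..x, g t) (Ici 0) := by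
  intro x hx
  have hx0 : (0:ℝ) ≤ x := hx
  have h := intervalIntegral.continuousOn_primitive_interval' (hg (x+1) (by linarith))
    (left_mem_uIcc)
  rw [uIcc_of_le (by linarith)] at h
  have h2 := h x ⟨hx, by linarith⟩
  refine h2.mono_of_mem_nhdsWithin ?_
  rw [mem_nhdsWithin]
  exact ⟨Iio (x+1), isOpen_Iio, by simp, fun y hy => ⟨hy.2, le_of_lt hy.1⟩⟩

lemma QQ_cont {f : ℝ → ℝ} (hf : ContinuousOn f (Ici 0)) : ContinuousOn (QQ f) (Ici 0) :=
  prim_cont fun _ hx => ici_ii (div_cont hf) hx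

lemma QQ_bound {f : ℝ → ℝ} {C X : ℝ} {n : ℕ}
    (h : ∀ s ∈ Icc 0 X, |f s| ≤ C * s ^ n) (hC : 0 ≤ C) {t : ℝ} (ht : t ∈ Icc 0 X) :
    |QQ f t| ≤ C * t ^ (n+1) := by
  have := intervalIntegral.norm_integral_le_of_norm_le_const (a := 0) (b := t)
    (f := fun t => f t / (1 + t)) (C := C * t ^ n) ?_
  · rw [Real.norm_eq_abs, sub_zero, abs_of_nonneg ht.1] at this
    rw [pow_succ, ← mul_assoc]; exact this
  · intro s hs
    rw [uIoc_of_le ht.1] at hs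
    have hs0 := hs.1
    rw [Real.norm_eq_abs, abs_div, abs_of_pos (by linarith : 0 < 1 + s)]
    have h1 : |f s| ≤ C * s ^ n := h s ⟨hs.1.le, hs.2.trans ht.2⟩
    have h2 : C * s ^ n ≤ C * t ^ n := by
      have := hs.2
      gcongr
    calc |f s| / (1 + s) ≤ |f s| := div_le_self (abs_nonneg _) (by linarith)
      _ ≤ _ := h1.trans h2

lemma QQ_div_bound {f : ℝ → ℝ} {C X : ℝ} {n : ℕ}
    (h : ∀ s ∈ Icc 0 X, |f s| ≤ C * s ^ n) (hC : 0 ≤ C) {t : ℝ} (ht : t ∈ Ioc 0 X) :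
    |QQ f t / t| ≤ C * t ^ n := by
  rw [abs_div, abs_of_pos ht.1, div_le_iff₀ ht.1, mul_assoc, ← pow_succ]
  exact QQ_bound h hC ⟨ht.1.le, ht.2⟩

lemma exists_bd {f : ℝ → ℝ} (hf : ContinuousOn f (Ici 0)) (X : ℝ) :
    ∃ C, 0 ≤ C ∧ ∀ s ∈ Icc 0 X, |f s| ≤ C * s ^ 0 := by
  obtain ⟨C, hC⟩ := isCompact_Icc.exists_bound_of_continuousOn
    (hf.mono (Icc_subset_Ici_self : Icc 0 X ⊆ Ici 0))
  refine ⟨max C 0, le_max_right _ _, fun s hs => ?_⟩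
  have := hC s hs
  simp only [pow_zero, mul_one]
  exact this.trans (le_max_left _ _)

lemma QQ_div_ii {f : ℝ → ℝ} (hf : ContinuousOn f (Ici 0)) {x : ℝ} (hx : 0 ≤ x) :
    IntervalIntegrable (fun t => QQ f t / t) volume 0 x := by
  obtain ⟨C, hC, hb⟩ := exists_bd hf x
  rw [intervalIntegrable_iff, uIoc_of_le hx]
  refine Integrable.of_bound ?_ C ?_
  · apply ContinuousOn.aestronglyMeasurable _ measurableSet_Ioc
    refine ((QQ_cont hf).mono ?_).div continuousOn_id ?_
    · intro t ht; exact ht.1.le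
    · intro t ht; exact ht.1.ne'
  · filter_upwards [ae_restrict_mem measurableSet_Ioc] with t ht
    have h := QQ_div_bound hb hC ht
    rw [pow_zero, mul_one] at h
    exact h

lemma TT_cont {f : ℝ → ℝ} (hf : ContinuousOn f (Ici 0)) : ContinuousOn (TT f) (Ici 0) :=
  prim_cont fun _ hx => QQ_div_ii hf hx

lemma TT_bound {f : ℝ → ℝ} {C X : ℝ} {n : ℕ}
    (h : ∀ s ∈ Icc 0 X, |f s| ≤ C * s ^ n) (hC : 0 ≤ C) {t : ℝ} (ht : t ∈ Icc 0 X) :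
    |TT f t| ≤ C / (n+1) * t ^ (n+1) := by
  have := intervalIntegral.norm_integral_le_of_norm_le (a := 0) (b := t) (μ := volume)
    (f := fun t => QQ f t / t) (g := fun t => C * t ^ n) ht.1 ?_ (by
      apply Continuous.intervalIntegrable; fun_prop)
  · rw [intervalIntegral.integral_const_mul, integral_pow] at this
    simp only [Real.norm_eq_abs] at this
    refine this.trans (le_of_eq ?_)
    simp; ring
  · refine Eventually.of_forall fun s hs => ?_
    exact QQ_div_bound h hC ⟨hs.1, hs.2.trans ht.2⟩

lemma QQ_lin {f g : ℝ → ℝ} (hf : ContinuousOn f (Ici 0)) (hg : ContinuousOn g (Ici 0))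
    (a : ℝ) {h : ℝ → ℝ} (hh : ∀ s, 0 ≤ s → h s = a * f s + g s) {x : ℝ} (hx : 0 ≤ x) :
    QQ h x = a * QQ f x + QQ g x := by
  unfold QQ
  rw [← intervalIntegral.integral_const_mul, ← intervalIntegral.integral_add
    ((ici_ii (div_cont hf) hx).const_mul a) (ici_ii (div_cont hg) hx)]
  refine intervalIntegral.integral_congr fun s hs => ?_
  rw [uIcc_of_le hx] at hs
  simp only [hh s hs.1]; ring

lemma TT_lin {f g : ℝ → ℝ} (hf : ContinuousOn f (Ici 0)) (hg : ContinuousOn g (Ici 0))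
    (a : ℝ) {h : ℝ → ℝ} (hh : ∀ s, 0 ≤ s → h s = a * f s + g s) {x : ℝ} (hx : 0 ≤ x) :
    TT h x = a * TT f x + TT g x := by
  unfold TT
  rw [← intervalIntegral.integral_const_mul, ← intervalIntegral.integral_add
    ((QQ_div_ii hf hx).const_mul a) (QQ_div_ii hg hx)]
  refine intervalIntegral.integral_congr fun s hs => ?_
  rw [uIcc_of_le hx] at hs
  simp only [QQ_lin hf hg a hh hs.1]; ring

lemma Afun_cont : ∀ n, ContinuousOn (Afun n) (Ici 0)
  | 0 => by simp only [Afun]; exact continuousOn_const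
  | n+1 => by rw [Afun_succ]; exact TT_cont (Afun_cont n)

noncomputable def EE (α : ℝ) (F : ℝ → ℝ) : ℕ → ℝ → ℝ
  | 0 => F
  | n+1 => fun x => α ^ 2 * TT (EE α F n) x

lemma EE_cont {α : ℝ} {F : ℝ → ℝ} (hF : ContinuousOn F (Ici 0)) :
    ∀ n, ContinuousOn (EE α F n) (Ici 0)
  | 0 => hF
  | n+1 => by
    simp only [EE]
    exact continuousOn_const.mul (TT_cont (EE_cont hF n))

lemma EE_rec {α : ℝ} {F : ℝ → ℝ} (hF : ContinuousOn F (Ici 0))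
    (h : ∀ x, 0 ≤ x → F x = 1 + α ^ 2 * TT F x) (n : ℕ) :
    ∀ x, 0 ≤ x → EE α F n x = α ^ (2*n) * Afun n x + EE α F (n+1) x := by
  induction n with
  | zero => intro x hx; simp [EE, Afun, h x hx]
  | succ n ih =>
    intro x hx
    have := TT_lin (Afun_cont n) (EE_cont hF (n+1)) _ ih hx
    have e1 : EE α F (n+1) x = α ^ 2 * TT (EE α F n) x := rfl
    have e2 : EE α F (n+1+1) x = α ^ 2 * TT (EE α F (n+1)) x := rfl
    rw [e1, e2, this, Afun_succ]
    ring

lemma EE_bound {α : ℝ} (hα : α ∈ Ioo (0:ℝ) 1) {F : ℝ → ℝ} {C X : ℝ} (hC : 0 ≤ C)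
    (hb : ∀ s ∈ Icc 0 X, |F s| ≤ C * s ^ 0) (n : ℕ) :
    ∀ s ∈ Icc 0 X, |EE α F n s| ≤ C / n.factorial * s ^ n := by
  induction n with
  | zero => simpa [EE] using hb
  | succ n ih =>
    intro s hs
    have h1 := TT_bound ih (by positivity) hs
    rw [EE, abs_mul, abs_of_nonneg (by positivity)]
    have h2 : α ^ 2 ≤ 1 := pow_le_one₀ hα.1.le hα.2.le
    calc α ^ 2 * |TT (EE α F n) s| ≤ 1 * |TT (EE α F n) s| := by gcongr
      _ ≤ C / n.factorial / (n+1) * s ^ (n+1) := by rw [one_mul]; exact h1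
      _ = _ := by rw [Nat.factorial_succ]; push_cast; field_simp

lemma Afun_bound (X : ℝ) (n : ℕ) :
    ∀ s ∈ Icc 0 X, |Afun n s| ≤ 1 / n.factorial * s ^ n := by
  induction n with
  | zero => simp [Afun]
  | succ n ih =>
    intro s hs
    have h1 := TT_bound ih (by positivity) hs
    rw [Afun_succ]
    refine h1.trans (le_of_eq ?_)
    rw [Nat.factorial_succ]; push_cast; field_simp

lemma main_aux {α : ℝ} (hα : α ∈ Ioo (0:ℝ) 1) {F : ℝ → ℝ} (hF : ContinuousOn F (Ici 0))
    (h : ∀ x, 0 ≤ x → F x = 1 + α ^ 2 * TT F x) {x : ℝ} (hx : 0 ≤ x) :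
    Summable (fun n : ℕ => |α ^ (2*n) * Bfun n x|) ∧
    ∑' n : ℕ, α ^ (2*n) * Bfun n x = QQ F x := by
  have hs : Summable (fun n : ℕ => |α ^ (2*n) * Bfun n x|) := by
    refine Summable.of_nonneg_of_le (fun _ => abs_nonneg _) (fun n => ?_)
      ((Real.summable_pow_div_factorial x).mul_left x)
    have h1 := QQ_bound (Afun_bound x n) (by positivity) (right_mem_Icc.2 hx)
    have h2 : α ^ (2*n) ≤ 1 := pow_le_one₀ hα.1.le hα.2.le
    have h3 := hα.1
    rw [abs_mul, abs_of_nonneg (by positivity), Bfun_eq]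
    calc α ^ (2*n) * |QQ (Afun n) x| ≤ 1 * |QQ (Afun n) x| := by gcongr
      _ ≤ 1 / n.factorial * x ^ (n+1) := by rw [one_mul]; exact h1
      _ = _ := by ring
  refine ⟨hs, ?_⟩
  have hrec : ∀ N : ℕ, ∑ n ∈ Finset.range N, α ^ (2*n) * Bfun n x = QQ F x - QQ (EE α F N) x := by
    intro N
    induction N with
    | zero => simp [EE]
    | succ N ih =>
      rw [Finset.sum_range_succ, ih,
        QQ_lin (Afun_cont N) (EE_cont hF (N+1)) _ (EE_rec hF h N) hx, Bfun_eq]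
      ring
  obtain ⟨C, hC, hb⟩ := exists_bd hF x
  have hlim : Tendsto (fun N => QQ (EE α F N) x) atTop (𝓝 0) := by
    have h0 := ((FloorSemiring.tendsto_pow_div_factorial_atTop x).const_mul (C * x))
    rw [mul_zero] at h0
    refine squeeze_zero_norm (fun N => ?_) h0
    have := QQ_bound (EE_bound hα hC hb N) (by positivity) (right_mem_Icc.2 hx)
    refine this.trans (le_of_eq ?_)
    ring
  have h1 := hs.of_abs.hasSum.tendsto_sum_nat
  refine tendsto_nhds_unique h1 ?_
  simp_rw [hrec]
  simpa using hlim.const_sub (QQ F x)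

/-! The Euler integral. -/

noncomputable def ww (α u : ℝ) : ℝ := u ^ (-α) * (1 - u) ^ α

lemma ww_ii {α : ℝ} (hα : α ∈ Ioo (0:ℝ) 1) : IntervalIntegrable (ww α) volume 0 1 := by
  unfold ww
  apply (intervalIntegral.intervalIntegrable_rpow' (by linarith [hα.2])).mul_continuousOn
  apply ContinuousOn.rpow_const (by fun_prop)
  intro u hu; right; exact hα.1.le

lemma ww_int {α : ℝ} (hα : α ∈ Ioo (0:ℝ) 1) :
    ∫ u in (0:ℝ)..1, ww α u = Real.Gamma (1 - α) * Real.Gamma (1 + α) := by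
  have h1 := ProbabilityTheory.beta_eq_betaIntegralReal (1 - α) (1 + α)
    (by linarith [hα.2]) (by linarith [hα.1])
  have h2 : Complex.betaIntegral ((1 - α : ℝ) : ℂ) ((1 + α : ℝ) : ℂ)
      = ((∫ u in (0:ℝ)..1, ww α u : ℝ) : ℂ) := by
    rw [Complex.betaIntegral, ← intervalIntegral.integral_ofReal]
    refine intervalIntegral.integral_congr fun u hu => ?_
    rw [uIcc_of_le zero_le_one] at hu
    simp only [ww]
    rw [Complex.ofReal_mul, Complex.ofReal_cpow hu.1, Complex.ofReal_cpow (by linarith [hu.2])]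
    push_cast
    congr 2 <;> ring
  rw [h2, Complex.ofReal_re, ProbabilityTheory.beta] at h1
  rw [← h1]
  norm_num

lemma prod_int {α : ℝ} (hα : α ∈ Ioo (0:ℝ) 1) {φ : ℝ → ℝ → ℝ} {x : ℝ} (hx : 0 ≤ x)
    (hφ : ContinuousOn φ.uncurry (Icc 0 x ×ˢ Icc 0 1)) :
    IntegrableOn (Function.uncurry fun t u => ww α u * φ t u) (uIoc 0 x ×ˢ uIoc 0 1) := by
  have h1 : IntegrableOn (ww α) (Icc 0 1) := by
    rw [integrableOn_Icc_iff_integrableOn_Ioc]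
    have := ww_ii hα
    rwa [intervalIntegrable_iff, uIoc_of_le zero_le_one] at this
  have h2 : IntegrableOn (fun _ : ℝ => (1:ℝ)) (Icc 0 x) := by simp
  have h3 := Integrable.mul_prod h2 h1
  rw [Measure.prod_restrict, ← Measure.volume_eq_prod] at h3
  have h4 := IntegrableOn.mul_continuousOn h3 hφ (isCompact_Icc.prod isCompact_Icc)
  rw [uIoc_of_le zero_le_one, uIoc_of_le hx]
  refine (h4.mono_set (prod_mono Ioc_subset_Icc_self Ioc_subset_Icc_self)).congr_fun ?_
    (measurableSet_Ioc.prod measurableSet_Ioc)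
  rintro ⟨t, u⟩ _
  simp [Function.uncurry]

lemma param_ii {α : ℝ} (hα : α ∈ Ioo (0:ℝ) 1) {φ : ℝ → ℝ → ℝ} {x : ℝ} (hx : 0 ≤ x)
    (hφ : ContinuousOn φ.uncurry (Icc 0 x ×ˢ Icc 0 1)) :
    IntervalIntegrable (fun t => ∫ u in (0:ℝ)..1, ww α u * φ t u) volume 0 x := by
  have h := prod_int hα hx hφ
  rw [IntegrableOn, Measure.volume_eq_prod, ← Measure.prod_restrict] at h
  have h2 := h.integral_prod_left
  rw [intervalIntegrable_iff]
  simp only [intervalIntegral.integral_of_le zero_le_one]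
  rw [uIoc_of_le zero_le_one] at h2
  exact h2

lemma swap_int {α : ℝ} (hα : α ∈ Ioo (0:ℝ) 1) {φ : ℝ → ℝ → ℝ} {x : ℝ} (hx : 0 ≤ x)
    (hφ : ContinuousOn φ.uncurry (Icc 0 x ×ˢ Icc 0 1)) :
    ∫ t in (0:ℝ)..x, ∫ u in (0:ℝ)..1, ww α u * φ t u =
      ∫ u in (0:ℝ)..1, ww α u * ∫ t in (0:ℝ)..x, φ t u := by
  rw [intervalIntegral_intervalIntegral_swap (prod_int hα hx hφ)]
  simp only [intervalIntegral.integral_const_mul]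

noncomputable def jj (α t u : ℝ) : ℝ := (1 + t * u) ^ (-1 - α)
noncomputable def kk (α t u : ℝ) : ℝ := (1 + t * u) ^ (-2 - α) * (1 - α * t * u)
noncomputable def JJ (α t : ℝ) : ℝ := ∫ u in (0:ℝ)..1, ww α u * jj α t u
noncomputable def KK (α t : ℝ) : ℝ := ∫ u in (0:ℝ)..1, ww α u * kk α t u

lemma pos_y {t u : ℝ} (ht : 0 ≤ t) (hu : 0 ≤ u) : 0 < 1 + t * u := by positivity

lemma jj_cont (α x : ℝ) : ContinuousOn (jj α).uncurry (Icc 0 x ×ˢ Icc 0 1) := by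
  unfold jj Function.uncurry
  apply ContinuousOn.rpow_const (by fun_prop)
  rintro ⟨t, u⟩ ⟨ht, hu⟩
  left; exact (pos_y ht.1 hu.1).ne'

lemma kk_cont (α x : ℝ) : ContinuousOn (kk α).uncurry (Icc 0 x ×ˢ Icc 0 1) := by
  unfold kk Function.uncurry
  refine ContinuousOn.mul (ContinuousOn.rpow_const (by fun_prop) ?_) (by fun_prop)
  rintro ⟨t, u⟩ ⟨ht, hu⟩
  left; exact (pos_y ht.1 hu.1).ne'

lemma sec_cont {φ : ℝ → ℝ → ℝ} {x : ℝ} (hφ : ContinuousOn φ.uncurry (Icc 0 x ×ˢ Icc 0 1))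
    {u : ℝ} (hu : u ∈ Icc (0:ℝ) 1) : ContinuousOn (fun t => φ t u) (Icc 0 x) :=
  hφ.comp (f := fun t => (t, u)) (by fun_prop) fun t ht => ⟨ht, hu⟩

lemma sec_cont' {φ : ℝ → ℝ → ℝ} {x : ℝ} (hφ : ContinuousOn φ.uncurry (Icc 0 x ×ˢ Icc 0 1))
    {t : ℝ} (ht : t ∈ Icc (0:ℝ) x) : ContinuousOn (fun u => φ t u) (Icc 0 1) :=
  hφ.comp (f := fun u => (t, u)) (by fun_prop) fun u hu => ⟨ht, hu⟩

lemma kk_prim {α x u : ℝ} (hx : 0 ≤ x) (hu : u ∈ Icc (0:ℝ) 1) :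
    ∫ t in (0:ℝ)..x, kk α t u = x * jj α x u := by
  rw [intervalIntegral.integral_eq_sub_of_hasDerivAt (f := fun t => t * jj α t u)]
  · simp
  · intro t ht
    rw [uIcc_of_le hx] at ht
    have hy := pos_y ht.1 hu.1
    have h1 : HasDerivAt (fun t : ℝ => 1 + t * u) u t := by
      simpa using ((hasDerivAt_id t).mul_const u).const_add 1
    have h2 := (hasDerivAt_id t).mul (h1.rpow_const (p := -1 - α) (Or.inl hy.ne'))
    unfold jj kk
    convert! h2 using 1
    simp only [id]
    rw [show -1 - α - 1 = -2 - α by ring, show -1 - α = -2 - α + 1 by ring,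
      Real.rpow_add_one hy.ne']
    ring
  · apply ContinuousOn.intervalIntegrable
    rw [uIcc_of_le hx]
    exact sec_cont (kk_cont α x) hu

lemma jj_prim {α x u : ℝ} (hα : 0 < α) (hx : 0 ≤ x) (hu : u ∈ Ioc (0:ℝ) 1) :
    ∫ t in (0:ℝ)..x, jj α t u = (1 - (1 + x * u) ^ (-α)) / (α * u) := by
  have hu0 := hu.1
  rw [intervalIntegral.integral_eq_sub_of_hasDerivAt
    (f := fun t => - (1 + t * u) ^ (-α) / (α * u))]
  · simp; ring
  · intro t ht
    rw [uIcc_of_le hx] at ht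
    have hy := pos_y ht.1 hu.1.le
    have h1 : HasDerivAt (fun t : ℝ => 1 + t * u) u t := by
      simpa using ((hasDerivAt_id t).mul_const u).const_add 1
    have h2 := ((h1.rpow_const (p := -α) (Or.inl hy.ne')).neg).div_const (α * u)
    unfold jj
    convert! h2 using 1
    rw [show -α - 1 = -1 - α by ring]
    field_simp
  · apply ContinuousOn.intervalIntegrable
    rw [uIcc_of_le hx]
    exact sec_cont (jj_cont α x) ⟨hu.1.le, hu.2⟩

lemma JJ_KK {α : ℝ} (hα : α ∈ Ioo (0:ℝ) 1) {x : ℝ} (hx : 0 ≤ x) :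
    ∫ t in (0:ℝ)..x, KK α t = x * JJ α x := by
  unfold KK JJ
  rw [swap_int hα hx (kk_cont α x), ← intervalIntegral.integral_const_mul]
  refine intervalIntegral.integral_congr fun u hu => ?_
  rw [uIcc_of_le zero_le_one] at hu
  simp only [kk_prim hx hu]; ring

lemma ijj_ii {α : ℝ} (hα : α ∈ Ioo (0:ℝ) 1) {x : ℝ} (hx : 0 ≤ x) :
    IntervalIntegrable (fun u => ww α u * ∫ t in (0:ℝ)..x, jj α t u) volume 0 1 := by
  have h := prod_int hα hx (jj_cont α x)
  rw [IntegrableOn, Measure.volume_eq_prod, ← Measure.prod_restrict] at h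
  have h2 := h.integral_prod_right
  rw [intervalIntegrable_iff]
  simp only [intervalIntegral.integral_of_le hx, ← integral_const_mul]
  rw [uIoc_of_le hx] at h2
  exact h2

noncomputable def PP (α x u : ℝ) : ℝ :=
  ww α u * ((1 - u) * (1 - (1 + x * u) ^ (-α) + x * u * (1 + x * u) ^ (-1 - α)))

lemma PP_deriv {α x u : ℝ} (hα : α ∈ Ioo (0:ℝ) 1) (hx : 0 ≤ x) (hu : u ∈ Ioo (0:ℝ) 1) :
    HasDerivAt (PP α x) ((1 + x) * (ww α u * kk α x u) - ww α u -
      α ^ 2 * (ww α u * ∫ t in (0:ℝ)..x, jj α t u)) u := by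
  rw [jj_prim hα.1 hx ⟨hu.1, hu.2.le⟩]
  have hu0 := hu.1
  have hu1 : 0 < 1 - u := by linarith [hu.2]
  have ha := hα.1
  have hy := pos_y hx hu.1.le
  have hY : HasDerivAt (fun u : ℝ => 1 + x * u) x u := by
    simpa using ((hasDerivAt_id u).const_mul x).const_add 1
  have hZ : HasDerivAt (fun u : ℝ => 1 - u) (-1) u := by
    simpa using (hasDerivAt_id u).const_sub 1
  have e1 := (hasDerivAt_id u).rpow_const (p := -α) (Or.inl hu0.ne')
  have e2 := hZ.rpow_const (p := α) (Or.inl hu1.ne')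
  have e3 := hY.rpow_const (p := -α) (Or.inl hy.ne')
  have e4 := hY.rpow_const (p := -1-α) (Or.inl hy.ne')
  have e5 := ((hasDerivAt_id u).const_mul x).mul e4
  have e6 := (e1.mul e2).mul (hZ.mul ((e3.const_sub 1).add e5))
  unfold PP ww kk
  convert! e6 using 1
  simp only [id, Pi.mul_apply, Pi.add_apply]
  rw [show -1 - α - 1 = -2 - α by ring, show -α - 1 = -1 - α by ring]
  have r1 : (1 + x * u) ^ (-1 - α) = (1 + x * u) ^ (-2 - α) * (1 + x * u) := by
    rw [← Real.rpow_add_one hy.ne']; ring_nf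
  have r2 : (1 + x * u) ^ (-α) = (1 + x * u) ^ (-2 - α) * (1 + x * u) * (1 + x * u) := by
    rw [← r1, ← Real.rpow_add_one hy.ne']; ring_nf
  have r3 : u ^ (-1 - α) = u ^ (-α) / u := by
    rw [← Real.rpow_sub_one hu0.ne']; ring_nf
  have r4 : (1 - u) ^ (α - 1) = (1 - u) ^ α / (1 - u) := by
    rw [← Real.rpow_sub_one hu1.ne']
  rw [r1, r2, r3, r4]
  generalize (1 + x * u) ^ (-2 - α) = y
  generalize u ^ (-α) = a
  generalize (1 - u) ^ α = b
  field_simp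
  ring

lemma PP_zero {α x : ℝ} (hα : α ∈ Ioo (0:ℝ) 1) (hx : 0 ≤ x) :
    Tendsto (PP α x) (𝓝[>] 0) (𝓝 0) := by
  have h0 : Tendsto (fun u : ℝ => 2 * x * u ^ (1 - α)) (𝓝[>] 0) (𝓝 0) := by
    have : ContinuousAt (fun u : ℝ => 2 * x * u ^ (1 - α)) 0 := by
      apply continuousAt_const.mul
      exact Real.continuousAt_rpow_const _ _ (Or.inr (by linarith [hα.2]))
    have h := this.tendsto
    rw [Real.zero_rpow (by linarith [hα.2]), mul_zero] at h
    exact h.mono_left nhdsWithin_le_nhds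
  refine squeeze_zero_norm' ?_ h0
  filter_upwards [Ioo_mem_nhdsGT (zero_lt_one' ℝ)] with u hu
  have hu0 := hu.1
  have hu1 : 0 < 1 - u := by linarith [hu.2]
  have hy := pos_y hx hu.1.le
  have hy1 : 1 ≤ 1 + x * u := by nlinarith
  have b1 : (1 + x * u) ^ (-α) ≤ 1 := Real.rpow_le_one_of_one_le_of_nonpos hy1 (by linarith [hα.1])
  have b2 : 1 - x * u ≤ (1 + x * u) ^ (-α) := by
    have : (1 + x * u) ^ (-1 : ℝ) ≤ (1 + x * u) ^ (-α) :=
      Real.rpow_le_rpow_of_exponent_le hy1 (by linarith [hα.2])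
    rw [Real.rpow_neg_one] at this
    refine le_trans ?_ this
    rw [inv_eq_one_div, le_div_iff₀ hy]
    nlinarith [sq_nonneg (x * u)]
  have b3 : (1 + x * u) ^ (-1-α) ≤ 1 :=
    Real.rpow_le_one_of_one_le_of_nonpos hy1 (by linarith [hα.1])
  have b4 : 0 ≤ (1 + x * u) ^ (-1-α) := by positivity
  have b5 : (1 - u) ^ α ≤ 1 := Real.rpow_le_one hu1.le (by linarith) hα.1.le
  have hxu : 0 ≤ x * u := by positivity
  have b6 : x * u * (1 + x * u) ^ (-1-α) ≤ x * u := mul_le_of_le_one_right hxu b3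
  have b7 : 0 ≤ x * u * (1 + x * u) ^ (-1-α) := by positivity
  unfold PP ww
  rw [Real.norm_eq_abs, abs_of_nonneg (by
    apply mul_nonneg (by positivity) (mul_nonneg hu1.le (by linarith)))]
  calc _ ≤ u ^ (-α) * 1 * (1 * (2 * (x * u))) := by
        gcongr
        · linarith
        · linarith
    _ = _ := by
      rw [show 1 - α = -α + 1 by ring, Real.rpow_add_one hu0.ne']; ring

lemma PP_one {α x : ℝ} (hα : α ∈ Ioo (0:ℝ) 1) (hx : 0 ≤ x) :
    Tendsto (PP α x) (𝓝[<] 1) (𝓝 0) := by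
  have : ContinuousAt (PP α x) 1 := by
    unfold PP ww
    have h1 : ContinuousAt (fun u : ℝ => u ^ (-α)) 1 :=
      Real.continuousAt_rpow_const _ _ (Or.inl one_ne_zero)
    have h2 : ContinuousAt (fun u : ℝ => (1 - u) ^ α) 1 :=
      ContinuousAt.rpow_const (by fun_prop) (Or.inr hα.1.le)
    have hn : 1 + x * 1 ≠ 0 := by positivity
    have h3 : ContinuousAt (fun u : ℝ => (1 + x * u) ^ (-α)) 1 :=
      ContinuousAt.rpow_const (by fun_prop) (Or.inl hn)
    have h4 : ContinuousAt (fun u : ℝ => (1 + x * u) ^ (-1-α)) 1 :=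
      ContinuousAt.rpow_const (by fun_prop) (Or.inl hn)
    have h5 : ContinuousAt (fun u : ℝ => 1 - u) 1 := by fun_prop
    have h6 : ContinuousAt (fun u : ℝ => x * u) 1 := by fun_prop
    exact (h1.mul h2).mul (h5.mul ((continuousAt_const.sub h3).add (h6.mul h4)))
  have h := this.tendsto
  rw [show PP α x 1 = 0 by simp [PP]] at h
  exact h.mono_left nhdsWithin_le_nhds

lemma key {α x : ℝ} (hα : α ∈ Ioo (0:ℝ) 1) (hx : 0 ≤ x) :
    (1 + x) * KK α x = (∫ u in (0:ℝ)..1, ww α u) + α ^ 2 * ∫ t in (0:ℝ)..x, JJ α t := by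
  have i1 : IntervalIntegrable (fun u => ww α u * kk α x u) volume 0 1 := by
    apply (ww_ii hα).mul_continuousOn
    rw [uIcc_of_le zero_le_one]
    exact sec_cont' (kk_cont α x) (right_mem_Icc.2 hx)
  have i2 := ww_ii hα
  have i3 := ijj_ii hα hx
  have h := intervalIntegral.integral_eq_sub_of_hasDerivAt_of_tendsto zero_lt_one
    (fun u hu => PP_deriv hα hx hu) (((i1.const_mul _).sub i2).sub (i3.const_mul _))
    (PP_zero hα hx) (PP_one hα hx)
  rw [intervalIntegral.integral_sub ((i1.const_mul _).sub i2) (i3.const_mul _),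
    intervalIntegral.integral_sub (i1.const_mul _) i2, intervalIntegral.integral_const_mul,
    intervalIntegral.integral_const_mul] at h
  unfold JJ KK
  rw [swap_int hα hx (jj_cont α x)]
  linarith

theorem hyperlog_series_B (α : ℝ) (hα : α ∈ Set.Ioo (0:ℝ) 1) (x : ℝ) (hx : 0 ≤ x) :
    Summable (fun n : ℕ => |α ^ (2*n) * Bfun n x|) ∧
    ∑' n : ℕ, α ^ (2*n) * Bfun n x = x * Hhyp α x := by
  set W := ∫ u in (0:ℝ)..1, ww α u with hW
  have hWG := ww_int hα
  have hWpos : 0 < W := by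
    rw [hW, hWG]
    exact mul_pos (Real.Gamma_pos_of_pos (by linarith [hα.2]))
      (Real.Gamma_pos_of_pos (by linarith [hα.1]))
  have hH : ∀ x, Hhyp α x = 1 / W * JJ α x := by
    intro x
    rw [Hhyp, hW, hWG]; rfl
  let F : ℝ → ℝ := fun x => 1 + α ^ 2 * (1 / W * ∫ t in (0:ℝ)..x, JJ α t)
  have hF : ContinuousOn F (Ici 0) := by
    refine continuousOn_const.add (continuousOn_const.mul (continuousOn_const.mul ?_))
    exact prim_cont fun x hx => param_ii hα hx (jj_cont α x)
  have hFK : ∀ x, 0 ≤ x → F x = (1 + x) * (1 / W * KK α x) := by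
    intro x hx
    have := key hα hx
    have h2 : (1 + x) * (1 / W * KK α x) = 1 / W * ((1 + x) * KK α x) := by ring
    rw [h2, this, ← hW]
    simp only [F]; field_simp
  have hQ : ∀ x, 0 ≤ x → QQ F x = x * (1 / W * JJ α x) := by
    intro x hx
    have : QQ F x = ∫ t in (0:ℝ)..x, 1 / W * KK α t := by
      refine intervalIntegral.integral_congr fun t ht => ?_
      rw [uIcc_of_le hx] at ht
      have : 0 < 1 + t := by linarith [ht.1]
      simp only [hFK t ht.1]; field_simp
    rw [this, intervalIntegral.integral_const_mul, JJ_KK hα hx]; ring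
  have hfix : ∀ x, 0 ≤ x → F x = 1 + α ^ 2 * TT F x := by
    intro x hx
    have : TT F x = ∫ t in (0:ℝ)..x, 1 / W * JJ α t := by
      refine intervalIntegral.integral_congr_ae (Eventually.of_forall fun t ht => ?_)
      rw [uIoc_of_le hx] at ht
      rw [hQ t ht.1.le]
      have := ht.1
      field_simp
    rw [this, intervalIntegral.integral_const_mul]
  have := main_aux hα hF hfix hx
  rwa [hQ x hx, ← hH] at this
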